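/- Let λ > 0. If u : ℝ → ℝ is twice continuously differentiable on [0, ∞), satisfies (1/2)·u''(x) + (λ/2)·(u(x) − 1)² = 0 for all x ≥ 0, and 0 ≤ u(x) ≤ 1 for all x ≥ 0, then u(x) → 1 as x → ∞. -/

import Mathlib

/-- A function on `[a, ∞)` whose derivative is bounded above by a negative constant eventually takes
a negative value. -/
theorem exists_neg_of_deriv_le_neg {f f' : ℝ → ℝ} {a C : ℝ} (hC : C < 0)
    (hf : ∀ x ≥ a, HasDerivAt f (f' x) x) (hle : ∀ x ≥ a, f' x ≤ C) :
    ∃ y ≥ a, f y < 0 := by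
  have hb : ∀ y ≥ a, f y - f a ≤ C * (y - a) := fun y hy =>
    (convex_Ici a).image_sub_le_mul_sub_of_deriv_le
      (fun x hx => (hf x hx).continuousAt.continuousWithinAt)
      (fun x hx => (hf x (interior_subset hx)).differentiableAt.differentiableWithinAt)
      (fun x hx => by
        rw [(hf x (interior_subset hx)).deriv]
        exact hle x (interior_subset hx))
      a Set.self_mem_Ici y hy hy
  have hd : 0 ≤ (|f a| + 1) / (-C) := div_nonneg (by positivity) (by linarith)
  refine ⟨a + (|f a| + 1) / (-C), by linarith, ?_⟩
  have h := hb (a + (|f a| + 1) / (-C)) (by linarith)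
  have hval : C * (a + (|f a| + 1) / (-C) - a) = -(|f a| + 1) := by
    have := hC.ne
    field_simp
    ring
  linarith [le_abs_self (f a)]

/-- Any C² solution on [0,∞) of (1/2)·u'' + (λ/2)·(u − 1)² = 0 with values in
[0,1] tends to 1 at infinity. -/
theorem stmt_2 (lam : ℝ) (hlam : 0 < lam) (u : ℝ → ℝ)
    (hreg : ContDiffOn ℝ 2 u (Set.Ici 0))
    (hode : ∀ x ≥ 0, (1 / 2) * iteratedDerivWithin 2 u (Set.Ici 0) x
      + (lam / 2) * (u x - 1) ^ 2 = 0)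
    (hbd : ∀ x ≥ 0, 0 ≤ u x ∧ u x ≤ 1) :
    Filter.Tendsto u Filter.atTop (nhds 1) := by
  set v := derivWithin u (Set.Ici 0) with hv
  have hu' : ∀ x > 0, HasDerivAt u (v x) x := fun x hx =>
    ((hreg.differentiableOn (by norm_num)) x hx.le).hasDerivWithinAt.hasDerivAt (Ici_mem_nhds hx)
  have hvreg : ContDiffOn ℝ 1 v (Set.Ici 0) :=
    hreg.derivWithin (uniqueDiffOn_Ici 0) (by norm_num)
  have hv' : ∀ x > 0, HasDerivAt v (-lam * (u x - 1) ^ 2) x := fun x hx => by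
    have h := ((hvreg.differentiableOn (by norm_num)) x hx.le).hasDerivWithinAt.hasDerivAt
      (Ici_mem_nhds hx)
    have ho := hode x hx.le
    rw [iteratedDerivWithin_succ, iteratedDerivWithin_one, ← hv] at ho
    rwa [show derivWithin v (Set.Ici 0) x = -lam * (u x - 1) ^ 2 by linarith] at h
  have hanti : AntitoneOn v (Set.Ioi 0) := by
    refine antitoneOn_of_deriv_nonpos (convex_Ioi 0)
      (fun x hx => (hv' x hx).continuousAt.continuousWithinAt)
      (fun x hx => (hv' x (interior_subset hx)).differentiableAt.differentiableWithinAt)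
      (fun x hx => ?_)
    rw [(hv' x (interior_subset hx)).deriv]
    nlinarith [mul_nonneg hlam.le (sq_nonneg (u x - 1))]
  have hvnonneg : ∀ x > 0, 0 ≤ v x := by
    intro a ha
    by_contra! hneg
    obtain ⟨y, hy, hlt⟩ := exists_neg_of_deriv_le_neg hneg
      (fun x hx => hu' x (ha.trans_le hx)) (fun x hx => hanti ha (ha.trans_le hx) hx)
    linarith [(hbd y (ha.le.trans hy)).1]
  have hmono : MonotoneOn u (Set.Ioi 0) := by
    refine monotoneOn_of_deriv_nonneg (convex_Ioi 0)
      (fun x hx => (hu' x hx).continuousAt.continuousWithinAt)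
      (fun x hx => (hu' x (interior_subset hx)).differentiableAt.differentiableWithinAt)
      (fun x hx => ?_)
    rw [(hu' x (interior_subset hx)).deriv]
    exact hvnonneg x (interior_subset hx)
  rw [Metric.tendsto_atTop]
  intro ε hε
  obtain ⟨a, ha, hua⟩ : ∃ a > 0, 1 - ε < u a := by
    by_contra! hle
    obtain ⟨y, hy, hlt⟩ := exists_neg_of_deriv_le_neg (a := 1) (C := -(lam * ε ^ 2))
      (neg_lt_zero.mpr (by positivity)) (fun x hx => hv' x (one_pos.trans_le hx))
      (fun x hx => by
        have h := hle x (one_pos.trans_le hx)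
        have hsq : ε ^ 2 ≤ (u x - 1) ^ 2 := by nlinarith
        linarith [mul_le_mul_of_nonneg_left hsq hlam.le])
    exact hlt.not_ge (hvnonneg y (one_pos.trans_le hy))
  refine ⟨a, fun x hx => ?_⟩
  have hx0 : 0 < x := ha.trans_le hx
  have h := hmono ha hx0 hx
  rw [Real.dist_eq, abs_lt]
  constructor <;> linarith [(hbd x hx0.le).2]
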